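/- The function f(k) = ∫_{−1}^{1} g(t,k)·p(t) dt satisfies lim_{k→+∞} f(k) = −(2/m₁)·∫_{−1}^{1} p(t) dt, which is strictly negative, and lim_{k→−∞} f(k) = (2/m₂)·∫_{−1}^{1} p(t) dt, which is strictly positive. -/

import Mathlib

/-!
For `k ≠ 0` one has `g(t,k) = -2/m₁ + 2 (1/m₁ + 1/m₂) w(t,k)` with
`w(t,k) = (exp(-k t) - exp(-k)) / (exp k - exp(-k))`. For `k > 0` and `t ∈ [-1,1]` the weight `w`
lies in `[0,1]`, and for `t > -1` it tends to `0` as `k → +∞`, being `O(exp(-k (1 + t)))`. Dominated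
convergence gives the limit at `+∞` against any continuous density (`tendsto_integral_g_atTop`).

The limit at `-∞` follows from the symmetry `g_{m₁,m₂}(t,-k) = -g_{m₂,m₁}(-t,k)`
(`g_neg_right`) and the substitution `t ↦ -t`. The signs follow from `p > 0` on `[-1,1]`.
-/

/-- The function `g(t,k)` from the appendix of "On Positivity in Sasaki Geometry". -/
noncomputable def g (m₁ m₂ t k : ℝ) : ℝ :=
  if k = 0 then (1 - t) / m₂ - (1 + t) / m₁
  else 2 * ((1 / m₁ + 1 / m₂) * Real.exp (-k * t) -
      (Real.exp k / m₁ + Real.exp (-k) / m₂)) / (Real.exp k - Real.exp (-k))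

/-- The weight `w(t,k)` that carries the dependence of `g` on `t`. -/
noncomputable def weight (t k : ℝ) : ℝ :=
  (Real.exp (-k * t) - Real.exp (-k)) / (Real.exp k - Real.exp (-k))

lemma exp_sub_exp_neg_pos {k : ℝ} (hk : 0 < k) : 0 < Real.exp k - Real.exp (-k) :=
  sub_pos.2 (Real.exp_lt_exp.2 (by linarith))

lemma g_eq_weight (m₁ m₂ t : ℝ) {k : ℝ} (hk : 0 < k) :
    g m₁ m₂ t k = -(2 / m₁) + 2 * (1 / m₁ + 1 / m₂) * weight t k := by
  have h := (exp_sub_exp_neg_pos hk).ne'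
  rw [g, if_neg hk.ne', weight, ← mul_div_assoc, div_eq_iff h, add_mul (-(2 / m₁)),
    div_mul_cancel₀ _ h]
  ring

lemma weight_nonneg {t k : ℝ} (hk : 0 < k) (ht : t ≤ 1) : 0 ≤ weight t k :=
  div_nonneg (sub_nonneg.2 (Real.exp_le_exp.2 (by nlinarith))) (exp_sub_exp_neg_pos hk).le

lemma weight_le_one {t k : ℝ} (hk : 0 < k) (ht : -1 ≤ t) : weight t k ≤ 1 := by
  rw [weight, div_le_one (exp_sub_exp_neg_pos hk)]
  exact sub_le_sub_right (Real.exp_le_exp.2 (by nlinarith)) _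

lemma weight_le_exp {t k : ℝ} (hk : 1 ≤ k) : weight t k ≤ 2 * Real.exp (-((1 + t) * k)) := by
  have hpos := exp_sub_exp_neg_pos (zero_lt_one.trans_le hk)
  rw [weight, div_le_iff₀ hpos]
  -- `exp k ≥ 2 ≥ 2 exp(-k)`, so the denominator is at least `exp k / 2`.
  have h2 : 2 * Real.exp (-k) ≤ Real.exp k := by
    have h3 := Real.add_one_le_exp k
    have h4 : Real.exp (-k) ≤ 1 := Real.exp_le_one_iff.2 (by linarith)
    linarith
  have h5 : Real.exp (-((1 + t) * k)) * Real.exp k = Real.exp (-k * t) := by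
    rw [← Real.exp_add]; ring_nf
  have h6 := Real.exp_pos (-((1 + t) * k))
  have h7 := Real.exp_pos (-k)
  nlinarith

lemma tendsto_weight {t : ℝ} (ht : -1 < t) (ht' : t ≤ 1) :
    Filter.Tendsto (weight t) Filter.atTop (nhds 0) := by
  have hlin : Filter.Tendsto (fun k : ℝ => (1 + t) * k) Filter.atTop Filter.atTop :=
    Filter.tendsto_id.const_mul_atTop (by linarith)
  have hexp : Filter.Tendsto (fun k : ℝ => 2 * Real.exp (-((1 + t) * k))) Filter.atTop
      (nhds 0) := by
    simpa using (Real.tendsto_exp_neg_atTop_nhds_zero.comp hlin).const_mul 2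
  refine tendsto_of_tendsto_of_tendsto_of_le_of_le' tendsto_const_nhds hexp ?_ ?_
  · filter_upwards [Filter.eventually_gt_atTop 0] with k hk using weight_nonneg hk ht'
  · filter_upwards [Filter.eventually_ge_atTop 1] with k hk using weight_le_exp hk

lemma continuous_g (m₁ m₂ k : ℝ) : Continuous fun t => g m₁ m₂ t k := by
  unfold g
  split_ifs <;> fun_prop

lemma tendsto_integral_g_atTop {m₁ m₂ : ℝ} (hm₁ : 0 < m₁) (hm₂ : 0 < m₂) {q : ℝ → ℝ}
    (hq : Continuous q) :
    Filter.Tendsto (fun k : ℝ => ∫ t in (-1 : ℝ)..1, g m₁ m₂ t k * q t)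
      Filter.atTop (nhds (-(2 / m₁) * ∫ t in (-1 : ℝ)..1, q t)) := by
  rw [← intervalIntegral.integral_const_mul]
  have hC : 0 ≤ 2 * (1 / m₁ + 1 / m₂) := by positivity
  refine intervalIntegral.tendsto_integral_filter_of_dominated_convergence
    (fun t => (2 / m₁ + 2 * (1 / m₁ + 1 / m₂)) * |q t|) ?_ ?_ ?_ ?_
  · exact Filter.Eventually.of_forall fun k =>
      ((continuous_g m₁ m₂ k).mul hq).aestronglyMeasurable
  · filter_upwards [Filter.eventually_gt_atTop 0] with k hk
    refine Filter.Eventually.of_forall fun t ht => ?_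
    rw [Set.uIoc_of_le (by norm_num)] at ht
    rw [norm_mul, Real.norm_eq_abs, Real.norm_eq_abs]
    refine mul_le_mul_of_nonneg_right ?_ (abs_nonneg _)
    rw [g_eq_weight m₁ m₂ t hk]
    have h0 := mul_nonneg hC (weight_nonneg hk ht.2)
    have h1 := mul_le_of_le_one_right hC (weight_le_one hk ht.1.le)
    have h2 : 0 < 2 / m₁ := by positivity
    rw [abs_le]
    constructor <;> linarith
  · exact (continuous_const.mul hq.abs).intervalIntegrable _ _
  · refine Filter.Eventually.of_forall fun t ht => ?_
    rw [Set.uIoc_of_le (by norm_num)] at ht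
    refine Filter.Tendsto.mul_const (q t) ?_
    have h := ((tendsto_weight ht.1 ht.2).const_mul (2 * (1 / m₁ + 1 / m₂))).const_add (-(2 / m₁))
    rw [mul_zero, add_zero] at h
    refine h.congr' ?_
    filter_upwards [Filter.eventually_gt_atTop 0] with k hk using (g_eq_weight m₁ m₂ t hk).symm

lemma g_neg_right (m₁ m₂ t k : ℝ) : g m₁ m₂ t (-k) = -g m₂ m₁ (-t) k := by
  unfold g
  by_cases hk : k = 0
  · simp [hk]; ring
  · rw [if_neg (neg_ne_zero.2 hk), if_neg hk, neg_neg, ← neg_sub (Real.exp k), div_neg,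
      neg_mul_neg]
    ring

lemma tendsto_integral_g_atBot {m₁ m₂ : ℝ} (hm₁ : 0 < m₁) (hm₂ : 0 < m₂) {q : ℝ → ℝ}
    (hq : Continuous q) :
    Filter.Tendsto (fun k : ℝ => ∫ t in (-1 : ℝ)..1, g m₁ m₂ t k * q t)
      Filter.atBot (nhds (2 / m₂ * ∫ t in (-1 : ℝ)..1, q t)) := by
  have h := ((tendsto_integral_g_atTop hm₂ hm₁ (hq.comp continuous_neg)).neg).comp
    Filter.tendsto_neg_atBot_atTop
  have hint : ∫ t in (-1 : ℝ)..1, (q ∘ Neg.neg) t = ∫ t in (-1 : ℝ)..1, q t := by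
    simp
  rw [hint, neg_mul, neg_neg] at h
  refine h.congr fun k => ?_
  have hsub := intervalIntegral.integral_comp_neg (a := -1) (b := 1)
    (fun t => g m₁ m₂ t k * q t)
  rw [neg_neg] at hsub
  rw [← hsub, Function.comp_apply, ← intervalIntegral.integral_neg]
  refine intervalIntegral.integral_congr fun t _ => ?_
  have hg := g_neg_right m₁ m₂ (-t) (-k)
  rw [neg_neg, neg_neg] at hg
  simp [hg]

lemma integral_pow_pos {r : ℝ} (hr : |r| < 1) (d : ℕ) :
    0 < ∫ t in (-1 : ℝ)..1, (1 + r * t) ^ d := by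
  refine intervalIntegral.intervalIntegral_pos_of_pos_on
    (Continuous.intervalIntegrable (by fun_prop) _ _) (fun t ht => ?_) (by norm_num)
  have hr' := abs_lt.1 hr
  refine pow_pos ?_ d
  rcases le_total 0 r with h | h <;> nlinarith [ht.1, ht.2]

/-- with `p(t) = (1 + r t)^d` and `f(k) = ∫_{−1}^{1} g(t,k) p(t) dt`, one has
`f(k) → −(2/m₁) ∫_{−1}^{1} p(t) dt < 0` as `k → +∞` and
`f(k) → (2/m₂) ∫_{−1}^{1} p(t) dt > 0` as `k → −∞`. -/
theorem f_limits (m₁ m₂ : ℝ) (hm₁ : 0 < m₁) (hm₂ : 0 < m₂)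
    (r : ℝ) (hr₀ : 0 < |r|) (hr₁ : |r| < 1) (d : ℕ) :
    Filter.Tendsto (fun k : ℝ => ∫ t in (-1 : ℝ)..1, g m₁ m₂ t k * (1 + r * t) ^ d)
      Filter.atTop (nhds (-(2 / m₁) * ∫ t in (-1 : ℝ)..1, (1 + r * t) ^ d)) ∧
    -(2 / m₁) * (∫ t in (-1 : ℝ)..1, (1 + r * t) ^ d) < 0 ∧
    Filter.Tendsto (fun k : ℝ => ∫ t in (-1 : ℝ)..1, g m₁ m₂ t k * (1 + r * t) ^ d)
      Filter.atBot (nhds ((2 / m₂) * ∫ t in (-1 : ℝ)..1, (1 + r * t) ^ d)) ∧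
    0 < (2 / m₂) * ∫ t in (-1 : ℝ)..1, (1 + r * t) ^ d := by
  have hq : Continuous fun t : ℝ => (1 + r * t) ^ d := by fun_prop
  have hpos := integral_pow_pos hr₁ d
  exact ⟨tendsto_integral_g_atTop hm₁ hm₂ hq,
    mul_neg_of_neg_of_pos (neg_neg_of_pos (by positivity)) hpos,
    tendsto_integral_g_atBot hm₁ hm₂ hq, mul_pos (by positivity) hpos⟩
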